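/- Compactness of minimizers (local Hausdorff convergence): let Ω ⊆ ℝⁿ be open and let (u_k) be a sequence of minimizers of J in Ω which is locally uniformly Lipschitz (for every compact K ⊆ ℝⁿ there is L such that every u_k is L-Lipschitz on K) and converges pointwise to a function u. Then {u_k > 0} → {u > 0} and F(u_k) → F(u) locally in the Hausdorff distance: for every compact K ⊆ Ω and every ε > 0 there is N such that for all k ≥ N, (a) every point of {u_k > 0} ∩ K is within distance ε of {u > 0} and every point of {u > 0} ∩ K is within distance ε of {u_k > 0}; (b) every point of F(u_k) ∩ K is within distance ε of F(u) and every point of F(u) ∩ K is within distance ε of F(u_k). Here F(w) := Ω ∩ ∂{w > 0} denotes the free boundary. -/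

import Mathlib

open MeasureTheory Metric Set Filter ENNReal NNReal

/-- The Alt–Caffarelli energy `J_D(u) = ∫_D (‖∇u‖² + 𝟙_{u>0})`, valued in `[0,∞]`. -/
noncomputable def JE {n : ℕ} (D : Set (EuclideanSpace ℝ (Fin n)))
    (u : EuclideanSpace ℝ (Fin n) → ℝ) : ℝ≥0∞ :=
  ∫⁻ x in D, ((‖gradient u x‖₊ : ℝ≥0∞) ^ 2 + if 0 < u x then 1 else 0)

/-- `u` is a (nonnegative, locally Lipschitz) minimizer of `J` in the open set `Ω`:
for every nonnegative locally Lipschitz competitor `v` with `{v ≠ u}` a bounded subset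
of `Ω`, one has `J_{Ω ∩ B}(u) ≤ J_{Ω ∩ B}(v)` for every open ball `B ⊇ {v ≠ u}`. -/
def IsMinimizer {n : ℕ} (Ω : Set (EuclideanSpace ℝ (Fin n)))
    (u : EuclideanSpace ℝ (Fin n) → ℝ) : Prop :=
  (∀ x, 0 ≤ u x) ∧ LocallyLipschitz u ∧
  ∀ v : EuclideanSpace ℝ (Fin n) → ℝ, (∀ x, 0 ≤ v x) → LocallyLipschitz v →
    Bornology.IsBounded {x | v x ≠ u x} → {x | v x ≠ u x} ⊆ Ω →
    ∀ (c : EuclideanSpace ℝ (Fin n)) (r : ℝ), {x | v x ≠ u x} ⊆ Metric.ball c r →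
      JE (Ω ∩ Metric.ball c r) u ≤ JE (Ω ∩ Metric.ball c r) v

/-! Everything reduces to two one-sided estimates, uniform over minimizers with a common Lipschitz
bound.

Nondegeneracy: if `u ≤ η r` on a ball of radius `r`, then `u` vanishes at the centre. Competing with
`(u - ζ)⁺`, for a cutoff `ζ` of height at least `sup u` and small slope, shows that halving the ball
halves the density of `{u > 0}` in it, as long as `u ≤ κ · radius`. Once the density is small, the
Lipschitz bound recovers `u ≤ κ · radius` on the smaller ball, so the iteration runs forever and
`u` is zero at the centre. Hence `u_k` vanishes near every point outside the closure of `{v > 0}`.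

Hopf barrier: if `u > 0` on a ball, competing with `max u φ` for a subharmonic barrier `φ` leaves
the positivity set unchanged, so only the Dirichlet energy matters and Green's formula gives
`φ ≤ u`. If the free boundaries of `u_k` stayed away from a free boundary point `x₀` of `v`, then
`u_k` would be positive on a ball containing `x₀` whose centre `c` has `v c > 0`, and the barrier
would bound `u_k x₀` below by a fixed positive number, whereas `u_k x₀` tends to `v x₀ = 0`. -/

open scoped Topology Gradient InnerProductSpace Laplacian

section LocallyLipschitz

variable {X F : Type*} [PseudoMetricSpace X] [ProperSpace X] [SeminormedAddCommGroup F]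

lemma exists_lipschitzOnWith_ball {f : X → F} (hf : LocallyLipschitz f) (c : X) (R : ℝ) :
    ∃ L : ℝ≥0, LipschitzOnWith L f (ball c R) := by
  obtain ⟨L, hL⟩ := (hf.locallyLipschitzOn (s := closedBall c R)).exists_lipschitzOnWith_of_compact
    (isCompact_closedBall c R)
  exact ⟨L, hL.mono ball_subset_closedBall⟩

lemma exists_lipschitzWith_of_hasCompactSupport {f : X → F} (hf : LocallyLipschitz f)
    (hc : HasCompactSupport f) : ∃ C : ℝ≥0, LipschitzWith C f := by
  set K := cthickening 1 (tsupport f)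
  have hK : IsCompact K := hc.cthickening
  obtain ⟨C, hC⟩ := (hf.locallyLipschitzOn (s := K)).exists_lipschitzOnWith_of_compact hK
  obtain ⟨M, hM⟩ := hc.exists_bound_of_continuous hf.continuous
  have near : ∀ x ∈ tsupport f, ∀ y, dist x y ≤ 1 → dist (f x) (f y) ≤ C * dist x y :=
    fun x hx y hxy ↦ hC.dist_le_mul x (self_subset_cthickening _ hx) y
      (mem_cthickening_of_dist_le y x 1 _ hx (by rwa [dist_comm]))
  refine ⟨max C (2 * M.toNNReal), LipschitzWith.of_dist_le_mul fun x y ↦ ?_⟩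
  rw [NNReal.coe_max]
  rcases le_total (dist x y) 1 with hxy | hxy
  · refine le_trans ?_ (mul_le_mul_of_nonneg_right (le_max_left _ _) dist_nonneg)
    by_cases hx : x ∈ tsupport f
    · exact near x hx y hxy
    by_cases hy : y ∈ tsupport f
    · simpa only [dist_comm] using near y hy x (by rwa [dist_comm])
    · rw [image_eq_zero_of_notMem_tsupport hx, image_eq_zero_of_notMem_tsupport hy, dist_self]
      positivity
  · calc dist (f x) (f y) ≤ ‖f x‖ + ‖f y‖ := dist_le_norm_add_norm _ _
      _ ≤ 2 * M := by linarith [hM x, hM y]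
      _ ≤ 2 * M * dist x y := le_mul_of_one_le_right (by linarith [norm_nonneg (f x), hM x]) hxy
      _ ≤ max (C : ℝ) (2 * M.toNNReal : ℝ≥0) * dist x y := by
        gcongr
        exact le_max_of_le_right (by push_cast; gcongr; exact Real.le_coe_toNNReal M)

end LocallyLipschitz

section Rademacher

variable {E : Type*} [NormedAddCommGroup E] [NormedSpace ℝ E] [FiniteDimensional ℝ E]
  [MeasurableSpace E] [BorelSpace E] {μ : Measure E} [μ.IsAddHaarMeasure]

lemma ae_differentiableAt_of_locallyLipschitz {f : E → ℝ} (hf : LocallyLipschitz f) :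
    ∀ᵐ x ∂μ, DifferentiableAt ℝ f x := by
  have hball (k : ℕ) : ∀ᵐ x ∂μ, x ∈ ball 0 (k : ℝ) → DifferentiableAt ℝ f x := by
    obtain ⟨L, hL⟩ := exists_lipschitzOnWith_ball hf 0 k
    filter_upwards [hL.ae_differentiableWithinAt_of_mem (μ := μ)] with x hx hxk
    exact (hx hxk).differentiableAt (isOpen_ball.mem_nhds hxk)
  filter_upwards [ae_all_iff.2 hball] with x hx
  obtain ⟨k, hk⟩ := exists_nat_gt ‖x‖
  exact hx k (mem_ball_zero_iff.2 hk)

lemma integral_lineDeriv_mul_eq_of_locallyLipschitz {f g : E → ℝ} (hf : LocallyLipschitz f)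
    (hg : LocallyLipschitz g) (hc : HasCompactSupport g) (v : E) :
    ∫ x, lineDeriv ℝ f x v * g x ∂μ = ∫ x, lineDeriv ℝ g x (-v) * f x ∂μ := by
  obtain ⟨D, hD⟩ := exists_lipschitzWith_of_hasCompactSupport hg hc
  set K := cthickening 1 (tsupport g)
  have hK : IsCompact K := hc.cthickening
  obtain ⟨C, hC⟩ := (hf.locallyLipschitzOn (s := K)).exists_lipschitzOnWith_of_compact hK
  obtain ⟨f', hf', hff'⟩ := hC.extend_real
  have hleft (x : E) : lineDeriv ℝ f' x v * g x = lineDeriv ℝ f x v * g x := by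
    by_cases hx : x ∈ tsupport g
    · have : f =ᶠ[𝓝 x] f' :=
        hff'.eventuallyEq_of_mem (mem_of_superset
          (isOpen_thickening.mem_nhds (self_subset_thickening one_pos _ hx))
          (thickening_subset_cthickening 1 _))
      rw [this.lineDeriv_eq]
    · simp only [image_eq_zero_of_notMem_tsupport hx, mul_zero]
  have hright (x : E) : lineDeriv ℝ g x (-v) * f' x = lineDeriv ℝ g x (-v) * f x := by
    by_cases hx : x ∈ tsupport g
    · rw [hff' (self_subset_cthickening _ hx)]
    · rw [(notMem_tsupport_iff_eventuallyEq.1 hx).lineDeriv_eq]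
      simp [lineDeriv]
  simpa only [hleft, hright] using hf'.integral_lineDeriv_mul_eq (μ := μ) hD hc v

end Rademacher

section Gradient

variable {E : Type*} [NormedAddCommGroup E] [InnerProductSpace ℝ E] [CompleteSpace E]
  {f g : E → ℝ} {x : E}

lemma gradient_fun_add (hf : DifferentiableAt ℝ f x) (hg : DifferentiableAt ℝ g x) :
    ∇ (fun y ↦ f y + g y) x = ∇ f x + ∇ g x := by
  simp only [gradient, fderiv_fun_add hf hg, map_add]

lemma gradient_fun_sub (hf : DifferentiableAt ℝ f x) (hg : DifferentiableAt ℝ g x) :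
    ∇ (fun y ↦ f y - g y) x = ∇ f x - ∇ g x := by
  simp only [gradient, fderiv_fun_sub hf hg, map_sub]

lemma gradient_max_zero (hf : ContinuousAt f x) :
    ∇ (fun y ↦ max (f y) 0) x = if 0 < f x then ∇ f x else 0 := by
  split_ifs with hx
  · have : (fun y ↦ max (f y) 0) =ᶠ[𝓝 x] f := by
      filter_upwards [hf.eventually (lt_mem_nhds hx)] with y hy using max_eq_left hy.le
    simp only [gradient, this.fderiv_eq]
  -- No differentiability is needed: `fderiv` vanishes at a local minimum, possibly as a junk value.
  · have : IsLocalMin (fun y ↦ max (f y) 0) x := Eventually.of_forall fun y ↦ by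
      simp only [max_eq_right (not_lt.1 hx), le_max_right]
    simp only [gradient, this.fderiv_eq_zero, map_zero]

lemma norm_gradient_le_of_lipschitzOnWith {L : ℝ≥0} {s : Set E} (hf : LipschitzOnWith L f s)
    (hs : s ∈ 𝓝 x) : ‖∇ f x‖ ≤ L :=
  (LinearIsometryEquiv.norm_map _ _).trans_le (norm_fderiv_le_of_lipschitzOn ℝ hs hf)

lemma measurable_gradient [MeasurableSpace E] [BorelSpace E] (f : E → ℝ) :
    Measurable (∇ f) :=
  (InnerProductSpace.toDual ℝ E).symm.continuous.measurable.comp (measurable_fderiv ℝ f)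

end Gradient

lemma laplacian_eq_sum_fderiv_fderiv {E ι : Type*} [NormedAddCommGroup E] [InnerProductSpace ℝ E]
    [FiniteDimensional ℝ E] [Fintype ι] (b : OrthonormalBasis ι ℝ E) {f : E → ℝ}
    (hf : ContDiff ℝ 2 f) (x : E) :
    Δ f x = ∑ i, fderiv ℝ (fun y ↦ fderiv ℝ f y (b i)) x (b i) := by
  have hd : DifferentiableAt ℝ (fderiv ℝ f) x :=
    (hf.fderiv_right (m := 1) le_rfl).differentiable one_ne_zero x
  simp [InnerProductSpace.laplacian_eq_iteratedFDeriv_orthonormalBasis f b,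
    iteratedFDeriv_two_apply, fderiv_clm_apply hd (differentiableAt_const _)]

lemma continuous_laplacian {E : Type*} [NormedAddCommGroup E] [InnerProductSpace ℝ E]
    [FiniteDimensional ℝ E] {f : E → ℝ} (hf : ContDiff ℝ 2 f) : Continuous (Δ f) := by
  rw [InnerProductSpace.laplacian_eq_iteratedFDeriv_stdOrthonormalBasis]
  have := hf.continuous_iteratedFDeriv (m := 2) le_rfl
  fun_prop

section Green

variable {E : Type*} [NormedAddCommGroup E] [InnerProductSpace ℝ E] [FiniteDimensional ℝ E]
  [MeasurableSpace E] [BorelSpace E] {μ : Measure E}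

lemma integrableOn_norm_gradient_sq [IsFiniteMeasureOnCompacts μ] {f : E → ℝ}
    (hf : LocallyLipschitz f) (c : E) (R : ℝ) :
    IntegrableOn (fun x ↦ ‖∇ f x‖ ^ 2) (ball c R) μ := by
  obtain ⟨L, hL⟩ := exists_lipschitzOnWith_ball hf c R
  refine Measure.integrableOn_of_bounded (M := (L : ℝ) ^ 2) measure_ball_lt_top.ne
    ((measurable_gradient f).norm.pow_const 2).aestronglyMeasurable ?_
  filter_upwards [ae_restrict_mem measurableSet_ball] with x hx
  rw [norm_pow, norm_norm]
  gcongr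
  exact norm_gradient_le_of_lipschitzOnWith hL (isOpen_ball.mem_nhds hx)

lemma integrable_inner_gradient [IsFiniteMeasureOnCompacts μ] {ψ : E → ℝ}
    (hψ : LocallyLipschitz ψ) (hc : HasCompactSupport ψ) {V : E → E} (hV : Continuous V) :
    Integrable (fun x ↦ ⟪∇ ψ x, V x⟫_ℝ) μ := by
  obtain ⟨D, hD⟩ := exists_lipschitzWith_of_hasCompactSupport hψ hc
  have hsupp : Function.support (fun x ↦ ⟪∇ ψ x, V x⟫_ℝ) ⊆ tsupport ψ := by
    refine Function.support_subset_iff'.2 fun x hx ↦ ?_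
    have : fderiv ℝ ψ x = 0 :=
      image_eq_zero_of_notMem_tsupport fun h ↦ hx (tsupport_fderiv_subset ℝ h)
    rw [inner_gradient_left, this, _root_.zero_apply]
  rw [← integrableOn_iff_integrable_of_support_subset hsupp]
  have hVint : IntegrableOn (fun x ↦ D * ‖V x‖) (tsupport ψ) μ :=
    (continuous_const.mul hV.norm).continuousOn.integrableOn_compact hc
  refine hVint.mono' (((measurable_gradient ψ).inner hV.measurable).aestronglyMeasurable) ?_
  refine Eventually.of_forall fun x ↦ (norm_inner_le_norm _ _).trans ?_
  gcongr
  exact norm_gradient_le_of_lipschitzOnWith (hD.lipschitzOnWith (s := univ)) univ_mem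

variable [μ.IsAddHaarMeasure]

lemma integral_inner_gradient_mul_eq_neg {f ψ : E → ℝ} (hf : ContDiff ℝ 1 f)
    (hψ : LocallyLipschitz ψ) (hc : HasCompactSupport ψ) (v : E) :
    ∫ x, ⟪∇ ψ x, v⟫_ℝ * f x ∂μ = -∫ x, ψ x * fderiv ℝ f x v ∂μ := by
  calc ∫ x, ⟪∇ ψ x, v⟫_ℝ * f x ∂μ = ∫ x, -(lineDeriv ℝ ψ x (-v) * f x) ∂μ := by
        refine integral_congr_ae ?_
        filter_upwards [ae_differentiableAt_of_locallyLipschitz (μ := μ) hψ] with x hx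
        rw [lineDeriv_neg, hx.lineDeriv_eq_fderiv, inner_gradient_left]
        ring
    _ = -∫ x, lineDeriv ℝ f x v * ψ x ∂μ := by
        rw [integral_neg, integral_lineDeriv_mul_eq_of_locallyLipschitz hf.locallyLipschitz hψ hc]
    _ = -∫ x, ψ x * fderiv ℝ f x v ∂μ := by
        simp only [(hf.differentiable one_ne_zero _).lineDeriv_eq_fderiv, mul_comm]

lemma integral_inner_gradient_eq_neg_integral_mul_laplacian {φ ψ : E → ℝ} (hφ : ContDiff ℝ 2 φ)
    (hψ : LocallyLipschitz ψ) (hc : HasCompactSupport ψ) :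
    ∫ x, ⟪∇ ψ x, ∇ φ x⟫_ℝ ∂μ = -∫ x, ψ x * Δ φ x ∂μ := by
  set b := stdOrthonormalBasis ℝ E
  have hφb (i) : ContDiff ℝ 1 fun x ↦ fderiv ℝ φ x (b i) :=
    (hφ.fderiv_right le_rfl).clm_apply contDiff_const
  have hint (i) : Integrable (fun x ↦ ψ x * fderiv ℝ (fun y ↦ fderiv ℝ φ y (b i)) x (b i)) μ :=
    (hψ.continuous.mul (((hφb i).continuous_fderiv one_ne_zero).clm_apply
      continuous_const)).integrable_of_hasCompactSupport hc.mul_right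
  calc ∫ x, ⟪∇ ψ x, ∇ φ x⟫_ℝ ∂μ
      = ∫ x, ∑ i, ⟪∇ ψ x, b i⟫_ℝ * fderiv ℝ φ x (b i) ∂μ := by
        refine integral_congr_ae (Eventually.of_forall fun x ↦ ?_)
        exact (b.sum_inner_mul_inner _ _).symm.trans <| Finset.sum_congr rfl fun i _ ↦ by
          rw [inner_gradient_right, conj_trivial]
    _ = ∑ i, ∫ x, ⟪∇ ψ x, b i⟫_ℝ * fderiv ℝ φ x (b i) ∂μ := by
        refine integral_finsetSum _ fun i _ ↦ ?_
        simpa only [real_inner_smul_right, mul_comm] using integrable_inner_gradient hψ hc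
          (V := fun x ↦ fderiv ℝ φ x (b i) • b i) ((hφb i).continuous.smul continuous_const)
    _ = -∑ i, ∫ x, ψ x * fderiv ℝ (fun y ↦ fderiv ℝ φ y (b i)) x (b i) ∂μ := by
        simp only [integral_inner_gradient_mul_eq_neg (hφb _) hψ hc, Finset.sum_neg_distrib]
    _ = -∫ x, ψ x * Δ φ x ∂μ := by
        rw [← integral_finsetSum _ fun i _ ↦ hint i]
        simp only [← Finset.mul_sum, laplacian_eq_sum_fderiv_fderiv b hφ]

end Green

section Energy

variable {n : ℕ} {Ω : Set (EuclideanSpace ℝ (Fin n))} {u : EuclideanSpace ℝ (Fin n) → ℝ}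

lemma JE_ball_eq_ofReal (hu : LocallyLipschitz u) (c : EuclideanSpace ℝ (Fin n)) (R : ℝ) :
    JE (ball c R) u = ENNReal.ofReal
      ((∫ x in ball c R, ‖∇ u x‖ ^ 2) + volume.real ({x | 0 < u x} ∩ ball c R)) := by
  have hpos : MeasurableSet {x | 0 < u x} :=
    (isOpen_lt continuous_const hu.continuous).measurableSet
  have hgrad : ∫⁻ x in ball c R, (‖∇ u x‖₊ : ℝ≥0∞) ^ 2 =
      ENNReal.ofReal (∫ x in ball c R, ‖∇ u x‖ ^ 2) := by
    rw [ofReal_integral_eq_lintegral_ofReal (integrableOn_norm_gradient_sq hu c R)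
      (Eventually.of_forall fun x ↦ by positivity)]
    simp only [ENNReal.ofReal_pow (norm_nonneg _), ofReal_norm, enorm_eq_nnnorm]
  have hvol : ∫⁻ x in ball c R, (if 0 < u x then 1 else 0) =
      volume ({x | 0 < u x} ∩ ball c R) := by
    rw [← Measure.restrict_apply hpos, ← lintegral_indicator_one hpos]
    rfl
  rw [JE, lintegral_add_left ((measurable_gradient u).nnnorm.coe_nnreal_ennreal.pow_const 2),
    hgrad, hvol, ENNReal.ofReal_add (by positivity) measureReal_nonneg,
    ofReal_measureReal (measure_inter_lt_top_of_right_ne_top measure_ball_lt_top.ne).ne]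

lemma IsMinimizer.isOpen_pos (hu : IsMinimizer Ω u) : IsOpen {x | 0 < u x} :=
  isOpen_lt continuous_const hu.2.1.continuous

lemma IsMinimizer.energy_ball_le (hu : IsMinimizer Ω u) {c : EuclideanSpace ℝ (Fin n)} {R : ℝ}
    (hb : ball c R ⊆ Ω) {w : EuclideanSpace ℝ (Fin n) → ℝ} (hw0 : ∀ x, 0 ≤ w x)
    (hw : LocallyLipschitz w) (hwu : ∀ x ∉ ball c R, w x = u x) :
    (∫ x in ball c R, ‖∇ u x‖ ^ 2) + volume.real ({x | 0 < u x} ∩ ball c R) ≤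
      (∫ x in ball c R, ‖∇ w x‖ ^ 2) + volume.real ({x | 0 < w x} ∩ ball c R) := by
  have hne : {x | w x ≠ u x} ⊆ ball c R := fun x hx ↦ by_contra fun h ↦ hx (hwu x h)
  have hJ := hu.2.2 w hw0 hw (isBounded_ball.subset hne) (hne.trans hb) c R hne
  rwa [inter_eq_self_of_subset_right hb, JE_ball_eq_ofReal hu.2.1, JE_ball_eq_ofReal hw,
    ENNReal.ofReal_le_ofReal_iff (by positivity)] at hJ

end Energy

section Cutoff

variable {X : Type*} [PseudoMetricSpace X]

/-- The truncated cone of height `δ` and slope `q` over `ball x₀ r`. It is the cutoff subtracted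
from a minimizer to build the competitor in the nondegeneracy estimate. -/
noncomputable def truncatedCone (x₀ : X) (r : ℝ) (q : ℝ≥0) (δ : ℝ) (x : X) : ℝ :=
  max 0 (min δ (q * (r - dist x x₀)))

variable {x₀ : X} {r : ℝ} {q : ℝ≥0} {δ : ℝ} {x : X}

lemma lipschitzWith_truncatedCone : LipschitzWith q (truncatedCone x₀ r q δ) := by
  have hcone : LipschitzWith q fun x : X ↦ (q : ℝ) * (r - dist x x₀) := by
    refine LipschitzWith.of_dist_le_mul fun x y ↦ ?_
    rw [Real.dist_eq, ← mul_sub, abs_mul, NNReal.abs_eq, _root_.sub_sub_sub_cancel_left,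
      abs_sub_comm]
    gcongr
    exact abs_dist_sub_le x y x₀
  exact (hcone.const_min δ).const_max 0

lemma truncatedCone_nonneg : 0 ≤ truncatedCone x₀ r q δ x := le_max_left _ _

lemma le_truncatedCone (hx : δ ≤ q * (r - dist x x₀)) : δ ≤ truncatedCone x₀ r q δ x :=
  le_max_of_le_right (le_min le_rfl hx)

lemma truncatedCone_eq_zero (hx : x ∉ ball x₀ r) : truncatedCone x₀ r q δ x = 0 :=
  max_eq_left <| (min_le_right _ _).trans <|
    mul_nonpos_of_nonneg_of_nonpos q.2 (sub_nonpos.2 (not_lt.1 hx))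

end Cutoff

section Truncation

variable {E : Type*} [NormedAddCommGroup E] [InnerProductSpace ℝ E] {u ζ : E → ℝ} {L q : ℝ≥0}

lemma norm_gradient_max_sub_sq_le [CompleteSpace E] {s : Set E} {x : E} (hL : LipschitzOnWith L u s)
    (hq : LipschitzOnWith q ζ s) (hs : s ∈ 𝓝 x) (hu : DifferentiableAt ℝ u x)
    (hζ : DifferentiableAt ℝ ζ x) (hζ0 : 0 ≤ ζ x) :
    ‖∇ (fun y ↦ max (u y - ζ y) 0) x‖ ^ 2 ≤
      ‖∇ u x‖ ^ 2 + {y | 0 < u y}.indicator (fun _ ↦ (2 * L * q + q ^ 2 : ℝ)) x := by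
  rw [gradient_max_zero (hu.fun_sub hζ).continuousAt]
  have hind : 0 ≤ {y | 0 < u y}.indicator (fun _ ↦ (2 * L * q + q ^ 2 : ℝ)) x :=
    indicator_nonneg (fun _ _ ↦ by positivity) x
  split_ifs with h
  · have hL' := norm_gradient_le_of_lipschitzOnWith hL hs
    have hq' := norm_gradient_le_of_lipschitzOnWith hq hs
    have hux : x ∈ {y | 0 < u y} := hζ0.trans_lt (sub_pos.1 h)
    rw [gradient_fun_sub hu hζ, indicator_of_mem hux]
    calc ‖∇ u x - ∇ ζ x‖ ^ 2 ≤ (‖∇ u x‖ + q) ^ 2 := by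
          gcongr
          exact (norm_sub_le _ _).trans (by gcongr)
      _ = ‖∇ u x‖ ^ 2 + (2 * ‖∇ u x‖ * q + q ^ 2) := by ring
      _ ≤ ‖∇ u x‖ ^ 2 + (2 * L * q + q ^ 2) := by gcongr
  · rw [norm_zero, zero_pow two_ne_zero]
    positivity

lemma integral_norm_gradient_max_sub_sq_le [FiniteDimensional ℝ E] [MeasurableSpace E]
    [BorelSpace E] {μ : Measure E} [μ.IsAddHaarMeasure] (hu : LocallyLipschitz u)
    (hζ : LocallyLipschitz ζ) {c : E} {R : ℝ} (hL : LipschitzOnWith L u (ball c R))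
    (hq : LipschitzOnWith q ζ (ball c R)) (hζ0 : ∀ x, 0 ≤ ζ x) :
    ∫ x in ball c R, ‖∇ (fun y ↦ max (u y - ζ y) 0) x‖ ^ 2 ∂μ ≤
      (∫ x in ball c R, ‖∇ u x‖ ^ 2 ∂μ) +
        (2 * L * q + q ^ 2) * μ.real ({x | 0 < u x} ∩ ball c R) := by
  have hpos : MeasurableSet {x | 0 < u x} :=
    (isOpen_lt continuous_const hu.continuous).measurableSet
  have hconst : IntegrableOn ({x | 0 < u x}.indicator fun _ ↦ (2 * L * q + q ^ 2 : ℝ))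
      (ball c R) μ := (integrableOn_const measure_ball_lt_top.ne).indicator hpos
  have hint := integrableOn_norm_gradient_sq (μ := μ) hu c R
  calc ∫ x in ball c R, ‖∇ (fun y ↦ max (u y - ζ y) 0) x‖ ^ 2 ∂μ
      ≤ ∫ x in ball c R, (‖∇ u x‖ ^ 2 +
          {x | 0 < u x}.indicator (fun _ ↦ (2 * L * q + q ^ 2 : ℝ)) x) ∂μ := by
        refine integral_mono_ae
          (integrableOn_norm_gradient_sq ((hu.sub hζ).max_const 0) c R) (hint.add hconst) ?_
        filter_upwards [ae_restrict_mem measurableSet_ball,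
          ae_restrict_of_ae (ae_differentiableAt_of_locallyLipschitz hu),
          ae_restrict_of_ae (ae_differentiableAt_of_locallyLipschitz hζ)] with x hx hxu hxζ
          using norm_gradient_max_sub_sq_le hL hq (isOpen_ball.mem_nhds hx) hxu hxζ (hζ0 x)
    _ = (∫ x in ball c R, ‖∇ u x‖ ^ 2 ∂μ) +
          (2 * L * q + q ^ 2) * μ.real ({x | 0 < u x} ∩ ball c R) := by
        rw [integral_add hint hconst, integral_indicator_const _ hpos,
          measureReal_restrict_apply hpos, smul_eq_mul, mul_comm]

end Truncation

section Volume

variable {E : Type*} [NormedAddCommGroup E] [NormedSpace ℝ E] [FiniteDimensional ℝ E]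
  [MeasurableSpace E] [BorelSpace E] (μ : Measure E) [μ.IsAddHaarMeasure]

lemma measureReal_ball_mul {s : ℝ} (hs : 0 < s) (x y : E) (r : ℝ) :
    μ.real (ball x (s * r)) = s ^ Module.finrank ℝ E * μ.real (ball y r) := by
  rw [measureReal_def, measureReal_def, Measure.addHaar_ball_mul_of_pos μ x hs,
    Measure.addHaar_ball_center μ y, ENNReal.toReal_mul, ENNReal.toReal_ofReal (by positivity)]

variable {μ}

lemma le_of_measureReal_pos_lt_of_lipschitzOnWith {f : E → ℝ} {L : ℝ≥0} {x₀ x : E} {R t : ℝ}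
    (hf : LipschitzOnWith L f (ball x₀ R)) (hL : 0 < L) (ht : 0 < t)
    (hvol : μ.real ({y | 0 < f y} ∩ ball x₀ R) < μ.real (ball x₀ (t / L)))
    (hx : x ∈ ball x₀ (R - t / L)) : f x ≤ t := by
  by_contra! htx
  have hball : ball x (t / L) ⊆ ball x₀ R := ball_subset_ball' (by linarith [mem_ball.1 hx])
  have hpos : ball x (t / L) ⊆ {y | 0 < f y} := fun y hy ↦ by
    have hxy := hf.dist_le_mul x (hball (mem_ball_self (by positivity))) y (hball hy)
    have hyt : L * dist x y < t := by
      rw [dist_comm]; exact (lt_div_iff₀' (by positivity)).1 (mem_ball.1 hy)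
    rw [Real.dist_eq] at hxy
    change 0 < f y
    linarith [le_abs_self (f x - f y)]
  refine hvol.not_ge ?_
  rw [measureReal_def μ (ball x₀ (t / L)), Measure.addHaar_ball_center μ x₀,
    ← Measure.addHaar_ball_center μ x, ← measureReal_def]
  exact measureReal_mono (subset_inter hpos hball)
    (measure_inter_lt_top_of_right_ne_top measure_ball_lt_top.ne).ne

lemma le_on_half_ball_of_measureReal_pos_le {f : E → ℝ} {L κ : ℝ≥0} {x₀ : E} {ρ d : ℝ}
    (hρ : 0 < ρ) (hκ : 0 < κ) (hκL : κ ≤ L) (hf : LipschitzOnWith L f (ball x₀ ρ))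
    (hd : d < (κ / (2 * L) : ℝ) ^ Module.finrank ℝ E)
    (hvol : μ.real ({y | 0 < f y} ∩ ball x₀ ρ) ≤ d * μ.real (ball x₀ ρ)) :
    ∀ x ∈ ball x₀ (1 / 2 * ρ), f x ≤ κ * (1 / 2 * ρ) := by
  intro x hx
  have hL : 0 < L := hκ.trans_le hκL
  refine le_of_measureReal_pos_lt_of_lipschitzOnWith hf hL (by positivity)
    (hvol.trans_lt ?_) (ball_subset_ball ?_ hx)
  · rw [show κ * (1 / 2 * ρ) / L = κ / (2 * L) * ρ by ring,
      measureReal_ball_mul μ (by positivity) x₀ x₀]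
    exact mul_lt_mul_of_pos_right hd
      (ENNReal.toReal_pos (measure_ball_pos _ _ hρ).ne' measure_ball_lt_top.ne)
  · have : κ * (1 / 2 * ρ) / L ≤ 1 / 2 * ρ := (div_le_iff₀' (NNReal.coe_pos.2 hL)).2 (by gcongr)
    linarith

end Volume

section Nondegeneracy

variable {n : ℕ} {Ω : Set (EuclideanSpace ℝ (Fin n))} {u : EuclideanSpace ℝ (Fin n) → ℝ}
  {x₀ : EuclideanSpace ℝ (Fin n)} {L : ℝ≥0}

lemma IsMinimizer.volume_pos_inter_ball_le (hu : IsMinimizer Ω u) {r s δ : ℝ} {q : ℝ≥0}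
    (hb : ball x₀ r ⊆ Ω) (hL : LipschitzOnWith L u (ball x₀ r)) (hδ : ∀ x ∈ ball x₀ r, u x ≤ δ)
    (hsr : s ≤ r) (hq : δ ≤ q * (r - s)) :
    volume.real ({x | 0 < u x} ∩ ball x₀ s) ≤
      (2 * L * q + q ^ 2) * volume.real ({x | 0 < u x} ∩ ball x₀ r) := by
  set B := ball x₀ r
  set P := {x | 0 < u x}
  set ζ := truncatedCone x₀ r q δ
  set w := fun x ↦ max (u x - ζ x) 0
  have hζ : LipschitzWith q ζ := lipschitzWith_truncatedCone
  have hζ0 (x) : 0 ≤ ζ x := truncatedCone_nonneg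
  have hw : LocallyLipschitz w := (hu.2.1.sub hζ.locallyLipschitz).max_const 0
  have hwu : ∀ x ∉ B, w x = u x := fun x hx ↦ by
    simp only [w, ζ, truncatedCone_eq_zero hx, sub_zero, max_eq_left (hu.1 x)]
  have hP : MeasurableSet P := hu.isOpen_pos.measurableSet
  have hfin (A : Set (EuclideanSpace ℝ (Fin n))) : volume (A ∩ B) ≠ ∞ :=
    (measure_inter_lt_top_of_right_ne_top measure_ball_lt_top.ne).ne
  have hgrad : ∫ x in B, ‖∇ w x‖ ^ 2 ≤
      (∫ x in B, ‖∇ u x‖ ^ 2) + (2 * L * q + q ^ 2) * volume.real (P ∩ B) :=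
    integral_norm_gradient_max_sub_sq_le hu.2.1 hζ.locallyLipschitz hL hζ.lipschitzOnWith hζ0
  have hpos : {x | 0 < w x} ∩ B ⊆ (P ∩ B) \ (P ∩ ball x₀ s) := fun x ⟨hwx, hxB⟩ ↦ by
    have hx : ζ x < u x := by simpa [w] using hwx
    refine ⟨⟨(hζ0 x).trans_lt hx, hxB⟩, fun ⟨_, hxs⟩ ↦ hx.not_ge ((hδ x hxB).trans ?_)⟩
    exact le_truncatedCone (hq.trans (by gcongr; exact hxs.le))
  have hvol : volume.real ({x | 0 < w x} ∩ B) ≤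
      volume.real (P ∩ B) - volume.real (P ∩ ball x₀ s) := by
    rw [← measureReal_sdiff (inter_subset_inter_right _ (ball_subset_ball hsr))
      (hP.inter measurableSet_ball) (hfin P)]
    exact measureReal_mono hpos (ne_top_of_le_ne_top (hfin P) (measure_mono sdiff_subset))
  linarith [hu.energy_ball_le hb (fun x ↦ le_max_right _ _) hw hwu]

lemma IsMinimizer.volume_pos_inter_half_ball_le (hu : IsMinimizer Ω u) {ρ d : ℝ} {κ : ℝ≥0}
    (hρ : 0 < ρ) (hb : ball x₀ ρ ⊆ Ω) (hL : LipschitzOnWith L u (ball x₀ ρ))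
    (hκ : 4 * L * κ + 4 * κ ^ 2 ≤ (1 / 2 : ℝ) ^ (n + 1)) (hsmall : ∀ x ∈ ball x₀ ρ, u x ≤ κ * ρ)
    (hd : volume.real ({x | 0 < u x} ∩ ball x₀ ρ) ≤ d * volume.real (ball x₀ ρ)) :
    volume.real ({x | 0 < u x} ∩ ball x₀ (1 / 2 * ρ)) ≤
      d / 2 * volume.real (ball x₀ (1 / 2 * ρ)) := by
  -- The cone of slope `2κ` costs the factor `4Lκ + 4κ²`; of the gain `2⁻ⁿ⁻¹`, the part `2⁻ⁿ` only
  -- compensates for the smaller volume of the half ball.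
  calc volume.real ({x | 0 < u x} ∩ ball x₀ (1 / 2 * ρ))
      ≤ (2 * L * (2 * κ : ℝ≥0) + (2 * κ : ℝ≥0) ^ 2) *
          volume.real ({x | 0 < u x} ∩ ball x₀ ρ) :=
        hu.volume_pos_inter_ball_le hb hL hsmall (by linarith)
          (by push_cast; exact le_of_eq (by ring))
    _ ≤ (1 / 2 : ℝ) ^ (n + 1) * (d * volume.real (ball x₀ ρ)) := by
        gcongr
        push_cast
        linarith
    _ = d / 2 * volume.real (ball x₀ (1 / 2 * ρ)) := by
        rw [measureReal_ball_mul volume one_half_pos x₀ x₀, finrank_euclideanSpace_fin]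
        ring

lemma IsMinimizer.volume_pos_inter_ball_two_pow_le (hu : IsMinimizer Ω u) {r : ℝ} {κ : ℝ≥0}
    (hr : 0 < r) (hb : ball x₀ r ⊆ Ω) (hL : LipschitzOnWith L u (ball x₀ r))
    (hκ : 4 * L * κ + 4 * κ ^ 2 ≤ (1 / 2 : ℝ) ^ (n + 1)) (j : ℕ)
    (hsmall : ∀ x ∈ ball x₀ r, u x ≤ κ * ((1 / 2) ^ j * r)) :
    volume.real ({x | 0 < u x} ∩ ball x₀ ((1 / 2) ^ j * r)) ≤
      (1 / 2) ^ j * volume.real (ball x₀ ((1 / 2) ^ j * r)) := by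
  induction j with
  | zero =>
    simpa using measureReal_mono inter_subset_right measure_ball_lt_top.ne
  | succ j ih =>
    have hhalf : (1 / 2 : ℝ) ^ (j + 1) * r ≤ (1 / 2) ^ j * r := by
      rw [pow_succ]
      linarith [show 0 < (1 / 2 : ℝ) ^ j * r by positivity]
    have hsub : ball x₀ ((1 / 2) ^ j * r) ⊆ ball x₀ r :=
      ball_subset_ball (mul_le_of_le_one_left hr.le (pow_le_one₀ (by norm_num) (by norm_num)))
    have hsmall' (x) (hx : x ∈ ball x₀ r) : u x ≤ κ * ((1 / 2) ^ j * r) :=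
      (hsmall x hx).trans (by gcongr)
    rw [show (1 / 2 : ℝ) ^ (j + 1) * r = 1 / 2 * ((1 / 2) ^ j * r) by ring,
      show (1 / 2 : ℝ) ^ (j + 1) = (1 / 2) ^ j / 2 by ring]
    exact hu.volume_pos_inter_half_ball_le (by positivity) (hsub.trans hb) (hL.mono hsub) hκ
      (fun x hx ↦ hsmall' x (hsub hx)) (ih hsmall')

lemma IsMinimizer.eq_zero_of_volume_pos_inter_ball_le (hu : IsMinimizer Ω u) {ρ d : ℝ} {κ : ℝ≥0}
    (hρ : 0 < ρ) (hb : ball x₀ ρ ⊆ Ω) (hL : LipschitzOnWith L u (ball x₀ ρ)) (hκ0 : 0 < κ)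
    (hκL : κ ≤ L) (hκ : 4 * L * κ + 4 * κ ^ 2 ≤ (1 / 2 : ℝ) ^ (n + 1)) (hd0 : 0 ≤ d)
    (hdκ : d < (κ / (2 * L) : ℝ) ^ n) (hsmall : ∀ x ∈ ball x₀ ρ, u x ≤ κ * ρ)
    (hd : volume.real ({x | 0 < u x} ∩ ball x₀ ρ) ≤ d * volume.real (ball x₀ ρ)) :
    u x₀ = 0 := by
  have hdecay (j : ℕ) : (∀ x ∈ ball x₀ ((1 / 2) ^ j * ρ), u x ≤ κ * ((1 / 2) ^ j * ρ)) ∧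
      volume.real ({x | 0 < u x} ∩ ball x₀ ((1 / 2) ^ j * ρ)) ≤
        d * volume.real (ball x₀ ((1 / 2) ^ j * ρ)) := by
    induction j with
    | zero => simpa using ⟨hsmall, hd⟩
    | succ j ih =>
      rw [pow_succ', mul_assoc]
      set σ := (1 / 2 : ℝ) ^ j * ρ
      have hσ : 0 < σ := by positivity
      have hsub : ball x₀ σ ⊆ ball x₀ ρ :=
        ball_subset_ball (mul_le_of_le_one_left hρ.le (pow_le_one₀ (by norm_num) (by norm_num)))
      refine ⟨le_on_half_ball_of_measureReal_pos_le hσ hκ0 hκL (hL.mono hsub) ?_ ih.2,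
        (hu.volume_pos_inter_half_ball_le hσ (hsub.trans hb) (hL.mono hsub) hκ
          ih.1 ih.2).trans ?_⟩
      · rwa [finrank_euclideanSpace_fin]
      · gcongr
        linarith
  have hlim : Tendsto (fun j : ℕ ↦ κ * ((1 / 2 : ℝ) ^ j * ρ)) atTop (𝓝 (κ * (0 * ρ))) :=
    ((_root_.tendsto_pow_atTop_nhds_zero_of_lt_one (by norm_num) (by norm_num)).mul_const
      ρ).const_mul _
  rw [zero_mul, mul_zero] at hlim
  exact (hu.1 x₀).antisymm' <|
    ge_of_tendsto' hlim fun j ↦ (hdecay j).1 x₀ (mem_ball_self (by positivity))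

theorem exists_forall_isMinimizer_eq_zero (n : ℕ) (L : ℝ≥0) : ∃ η : ℝ, 0 < η ∧
    ∀ (Ω : Set (EuclideanSpace ℝ (Fin n))) (u : EuclideanSpace ℝ (Fin n) → ℝ)
      (x₀ : EuclideanSpace ℝ (Fin n)) (r : ℝ), IsMinimizer Ω u → 0 < r → ball x₀ r ⊆ Ω →
      LipschitzOnWith L u (ball x₀ r) → (∀ x ∈ ball x₀ r, u x ≤ η * r) → u x₀ = 0 := by
  set M : ℝ≥0 := max L 1
  have hM : (1 : ℝ) ≤ M := by exact_mod_cast le_max_right L 1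
  set κ : ℝ≥0 := (1 / 2) ^ (n + 1) / (8 * M)
  have hκ0 : 0 < κ := by positivity
  have hθ : (1 / 2 : ℝ) ^ (n + 1) ≤ 1 := pow_le_one₀ (by norm_num) (by norm_num)
  have hκM : 8 * M * κ = (1 / 2 : ℝ) ^ (n + 1) := by
    simp only [κ]; push_cast; field_simp
  have hκ1 : (κ : ℝ) ≤ 1 / 8 := by nlinarith [κ.2]
  obtain ⟨j, hj⟩ := exists_pow_lt_of_lt_one (show (0 : ℝ) < (κ / (2 * M)) ^ n by positivity)
    one_half_lt_one
  refine ⟨κ * (1 / 2) ^ j, by positivity, fun Ω u x₀ r hu hr hb hL hsmall ↦ ?_⟩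
  replace hL : LipschitzOnWith M u (ball x₀ r) := hL.weaken (le_max_left _ _)
  have hκ : 4 * M * κ + 4 * κ ^ 2 ≤ (1 / 2 : ℝ) ^ (n + 1) := by nlinarith [κ.2]
  have hsub : ball x₀ ((1 / 2) ^ j * r) ⊆ ball x₀ r :=
    ball_subset_ball (mul_le_of_le_one_left hr.le (pow_le_one₀ (by norm_num) (by norm_num)))
  simp only [mul_assoc] at hsmall
  exact hu.eq_zero_of_volume_pos_inter_ball_le (by positivity) (hsub.trans hb) (hL.mono hsub) hκ0
    (NNReal.coe_le_coe.1 (by linarith)) hκ (by positivity) hj (fun x hx ↦ hsmall x (hsub hx))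
    (hu.volume_pos_inter_ball_two_pow_le hr hb hL hκ j hsmall)

end Nondegeneracy

section Comparison

lemma norm_gradient_add_max_sub_sq_le {E : Type*} [NormedAddCommGroup E] [InnerProductSpace ℝ E]
    [CompleteSpace E] {u φ : E → ℝ} {x : E} (hu : DifferentiableAt ℝ u x)
    (hφ : DifferentiableAt ℝ φ x) (hψ : DifferentiableAt ℝ (fun y ↦ max (φ y - u y) 0) x) :
    ‖∇ (fun y ↦ u y + max (φ y - u y) 0) x‖ ^ 2 ≤
      ‖∇ u x‖ ^ 2 + 2 * ⟪∇ (fun y ↦ max (φ y - u y) 0) x, ∇ φ x⟫_ℝ := by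
  rw [gradient_fun_add hu hψ, gradient_max_zero (hφ.fun_sub hu).continuousAt]
  split_ifs
  · rw [gradient_fun_sub hφ hu, add_sub_cancel, inner_sub_left, real_inner_self_eq_norm_sq]
    linarith [sq_nonneg ‖∇ φ x - ∇ u x‖, norm_sub_sq_real (∇ φ x) (∇ u x),
      real_inner_comm (∇ φ x) (∇ u x)]
  · simp

variable {n : ℕ} {Ω : Set (EuclideanSpace ℝ (Fin n))} {u φ : EuclideanSpace ℝ (Fin n) → ℝ}
  {c : EuclideanSpace ℝ (Fin n)} {R : ℝ}

lemma hasCompactSupport_max_sub_zero {X : Type*} [PseudoMetricSpace X] [ProperSpace X]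
    {f g : X → ℝ} {c : X} {R : ℝ} (h : ∀ x, g x < f x → x ∈ ball c R) :
    HasCompactSupport fun x ↦ max (f x - g x) 0 :=
  .of_support_subset_isCompact (isCompact_closedBall c R) fun x hx ↦ by
    refine ball_subset_closedBall (h x (not_le.1 fun hle ↦ hx ?_))
    exact max_eq_right (sub_nonpos.2 hle)

lemma IsMinimizer.integral_norm_gradient_sq_le_add_max (hu : IsMinimizer Ω u)
    (hb : ball c R ⊆ Ω) (hφ : LocallyLipschitz φ) (h : ∀ x, u x < φ x → x ∈ ball c R ∧ 0 < u x) :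
    ∫ x in ball c R, ‖∇ u x‖ ^ 2 ≤
      ∫ x in ball c R, ‖∇ (fun y ↦ u y + max (φ y - u y) 0) x‖ ^ 2 := by
  have hψ0 (x) : 0 ≤ max (φ x - u x) 0 := le_max_right _ _
  have hψ (x) (hx : ¬(x ∈ ball c R ∧ 0 < u x)) : u x + max (φ x - u x) 0 = u x := by
    rw [max_eq_right (sub_nonpos.2 (not_lt.1 (mt (h x) hx))), add_zero]
  have hpos : {x | 0 < u x + max (φ x - u x) 0} = {x | 0 < u x} := by
    refine Subset.antisymm (fun x hx ↦ not_not.1 fun hux ↦ hux ?_) fun x hx ↦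
      add_pos_of_pos_of_nonneg hx (hψ0 x)
    rwa [mem_ofPred_eq, hψ x (mt And.right hux)] at hx
  have hE := hu.energy_ball_le hb (fun x ↦ add_nonneg (hu.1 x) (hψ0 x))
    (hu.2.1.add ((hφ.sub hu.2.1).max_const 0)) fun x hx ↦ hψ x (mt And.left hx)
  rwa [hpos, add_le_add_iff_right] at hE

lemma IsMinimizer.integral_inner_gradient_max_sub_nonneg (hu : IsMinimizer Ω u)
    (hb : ball c R ⊆ Ω) (hφ : ContDiff ℝ 1 φ) (h : ∀ x, u x < φ x → x ∈ ball c R ∧ 0 < u x) :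
    0 ≤ ∫ x, ⟪∇ (fun y ↦ max (φ y - u y) 0) x, ∇ φ x⟫_ℝ := by
  set ψ := fun x ↦ max (φ x - u x) 0
  have hψ : LocallyLipschitz ψ := (hφ.locallyLipschitz.sub hu.2.1).max_const 0
  have hu2 := integrableOn_norm_gradient_sq (μ := volume) hu.2.1 c R
  have hcross : Integrable fun x ↦ 2 * ⟪∇ ψ x, ∇ φ x⟫_ℝ :=
    (integrable_inner_gradient hψ (hasCompactSupport_max_sub_zero fun x hx ↦ (h x hx).1)
      ((InnerProductSpace.toDual ℝ _).symm.continuous.comp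
        (hφ.continuous_fderiv one_ne_zero))).const_mul 2
  have hsupp : ∫ x in ball c R, 2 * ⟪∇ ψ x, ∇ φ x⟫_ℝ = ∫ x, 2 * ⟪∇ ψ x, ∇ φ x⟫_ℝ := by
    refine setIntegral_eq_integral_of_forall_compl_eq_zero fun x hx ↦ ?_
    rw [gradient_max_zero (hφ.continuous.fun_sub hu.2.1.continuous).continuousAt,
      if_neg fun hlt ↦ hx (h x (sub_pos.1 hlt)).1, inner_zero_left, mul_zero]
  have hle : ∫ x in ball c R, ‖∇ u x‖ ^ 2 ≤
      (∫ x in ball c R, ‖∇ u x‖ ^ 2) + 2 * ∫ x, ⟪∇ ψ x, ∇ φ x⟫_ℝ := by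
    rw [← integral_const_mul, ← hsupp, ← integral_add hu2 hcross.integrableOn]
    refine (hu.integral_norm_gradient_sq_le_add_max hb hφ.locallyLipschitz h).trans
      (integral_mono_ae (integrableOn_norm_gradient_sq (hu.2.1.add hψ) c R)
        (hu2.add hcross.integrableOn) ?_)
    filter_upwards [ae_restrict_of_ae (ae_differentiableAt_of_locallyLipschitz hu.2.1),
      ae_restrict_of_ae (ae_differentiableAt_of_locallyLipschitz hψ)] with x hxu hxψ
      using norm_gradient_add_max_sub_sq_le hxu (hφ.differentiable one_ne_zero x) hxψ
  linarith

lemma IsMinimizer.le_of_laplacian_pos (hu : IsMinimizer Ω u) (hb : ball c R ⊆ Ω)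
    (hφ : ContDiff ℝ 2 φ) (h : ∀ x, u x < φ x → x ∈ ball c R ∧ 0 < u x ∧ 0 < Δ φ x)
    (x : EuclideanSpace ℝ (Fin n)) : φ x ≤ u x := by
  set ψ := fun x ↦ max (φ x - u x) 0
  have hφ1 : ContDiff ℝ 1 φ := hφ.of_le one_le_two
  have hψ : LocallyLipschitz ψ := (hφ1.locallyLipschitz.sub hu.2.1).max_const 0
  have hc : HasCompactSupport ψ := hasCompactSupport_max_sub_zero fun x hx ↦ (h x hx).1
  have hψΔ_nonneg (y) : 0 ≤ ψ y * Δ φ y := by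
    rcases le_or_gt (φ y) (u y) with hy | hy
    · simp only [ψ, max_eq_right (sub_nonpos.2 hy), zero_mul, le_refl]
    · exact mul_nonneg (le_max_right _ _) (h y hy).2.2.le
  by_contra! hx
  have hψΔ_pos : 0 < ∫ y, ψ y * Δ φ y :=
    (hψ.continuous.mul (continuous_laplacian hφ)).integral_pos_of_hasCompactSupport_nonneg_nonzero
      hc.mul_right hψΔ_nonneg
      (mul_pos (lt_max_of_lt_left (sub_pos.2 hx)) (h x hx).2.2).ne'
  have hgreen := integral_inner_gradient_eq_neg_integral_mul_laplacian (μ := volume) hφ hψ hc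
  have := hu.integral_inner_gradient_max_sub_nonneg hb hφ1 fun y hy ↦ ⟨(h y hy).1, (h y hy).2.1⟩
  linarith

end Comparison

section HopfBarrier

variable {E : Type*} [NormedAddCommGroup E]

/-- The barrier from the proof of the Hopf lemma: a Gaussian centred at `c`, shifted so as to vanish
on the sphere of radius `R`. It bounds a minimizer from below on balls where it is positive. -/
noncomputable def hopfBarrier (c : E) (α R : ℝ) (x : E) : ℝ :=
  Real.exp (-α * ‖x - c‖ ^ 2) - Real.exp (-α * R ^ 2)

variable {c x : E} {α R : ℝ}

lemma hopfBarrier_lt_one (hα : 0 ≤ α) : hopfBarrier c α R x < 1 := by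
  have : Real.exp (-α * ‖x - c‖ ^ 2) ≤ 1 :=
    Real.exp_le_one_iff.2 (mul_nonpos_of_nonpos_of_nonneg (neg_nonpos.2 hα) (by positivity))
  exact (sub_lt_self _ (Real.exp_pos _)).trans_le this

lemma hopfBarrier_pos (hα : 0 < α) (hx : x ∈ ball c R) : 0 < hopfBarrier c α R x := by
  rw [mem_ball_iff_norm] at hx
  rw [hopfBarrier, sub_pos, Real.exp_lt_exp, neg_mul, neg_mul, neg_lt_neg_iff]
  gcongr

lemma hopfBarrier_nonpos (hα : 0 ≤ α) (hR : 0 ≤ R) (hx : x ∉ ball c R) :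
    hopfBarrier c α R x ≤ 0 := by
  rw [mem_ball_iff_norm, not_lt] at hx
  rw [hopfBarrier, sub_nonpos, Real.exp_le_exp, neg_mul, neg_mul, neg_le_neg_iff]
  gcongr

variable [InnerProductSpace ℝ E]

lemma contDiff_hopfBarrier : ContDiff ℝ 2 (hopfBarrier c α R) :=
  ((contDiff_const.mul ((contDiff_id.sub contDiff_const).norm_sq ℝ)).exp).sub contDiff_const

lemma hasFDerivAt_exp_neg_mul_norm_sub_sq (c : E) (α : ℝ) (x : E) :
    HasFDerivAt (fun y ↦ Real.exp (-α * ‖y - c‖ ^ 2))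
      ((-2 * α * Real.exp (-α * ‖x - c‖ ^ 2)) • innerSL ℝ (x - c)) x := by
  refine ((((hasFDerivAt_id x).sub_const c).norm_sq).const_mul (-α)).exp.congr_fderiv ?_
  ext v
  simp only [id_eq, neg_mul, map_sub, ContinuousLinearMap.comp_id, neg_smul, smul_neg,
    _root_.neg_apply, _root_.smul_apply, _root_.sub_apply, coe_innerSL_apply, nsmul_eq_mul,
    Nat.cast_ofNat, smul_eq_mul, neg_inj]
  ring

lemma laplacian_hopfBarrier [FiniteDimensional ℝ E] (c : E) (α R : ℝ) (x : E) :
    Δ (hopfBarrier c α R) x =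
      (4 * α ^ 2 * ‖x - c‖ ^ 2 - 2 * α * Module.finrank ℝ E) * Real.exp (-α * ‖x - c‖ ^ 2) := by
  have hfst (y v : E) : fderiv ℝ (hopfBarrier c α R) y v =
      -2 * α * (Real.exp (-α * ‖y - c‖ ^ 2) * ⟪v, y - c⟫_ℝ) := by
    have h : HasFDerivAt (hopfBarrier c α R) _ y :=
      (hasFDerivAt_exp_neg_mul_norm_sub_sq c α y).sub_const _
    rw [h.fderiv, _root_.smul_apply, innerSL_apply_apply, real_inner_comm, smul_eq_mul, mul_assoc]
  have hsnd (v : E) :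
      fderiv ℝ (fun y ↦ -2 * α * (Real.exp (-α * ‖y - c‖ ^ 2) * ⟪v, y - c⟫_ℝ)) x v =
        (4 * α ^ 2 * ⟪v, x - c⟫_ℝ ^ 2 - 2 * α * ‖v‖ ^ 2) * Real.exp (-α * ‖x - c‖ ^ 2) := by
    have hinner : HasFDerivAt (fun y ↦ ⟪v, y - c⟫_ℝ) (innerSL ℝ v) x := by
      simpa only [inner_sub_right, innerSL_apply_apply] using
        ((innerSL ℝ v).hasFDerivAt (x := x)).sub_const ⟪v, c⟫_ℝ
    rw [(((hasFDerivAt_exp_neg_mul_norm_sub_sq c α x).fun_mul hinner).const_mul _).fderiv]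
    simp only [_root_.smul_apply, _root_.add_apply, smul_eq_mul, innerSL_apply_apply,
      real_inner_self_eq_norm_sq, real_inner_comm v (x - c)]
    ring
  rw [laplacian_eq_sum_fderiv_fderiv (stdOrthonormalBasis ℝ E) contDiff_hopfBarrier]
  simp only [hfst, hsnd, ← Finset.sum_mul, Finset.sum_sub_distrib, ← Finset.mul_sum,
    (stdOrthonormalBasis ℝ E).sum_sq_inner_right, OrthonormalBasis.norm_eq_one, one_pow,
    Finset.sum_const, Finset.card_univ, Fintype.card_fin, nsmul_eq_mul, mul_one]
  ring

lemma laplacian_hopfBarrier_pos [FiniteDimensional ℝ E] {ρ : ℝ} (hα : 0 < α) (hρ : 0 ≤ ρ)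
    (hαρ : Module.finrank ℝ E < 2 * α * ρ ^ 2) (hx : x ∉ ball c ρ) :
    0 < Δ (hopfBarrier c α R) x := by
  rw [mem_ball_iff_norm, not_lt] at hx
  have hρx : ρ ^ 2 ≤ ‖x - c‖ ^ 2 := by gcongr
  rw [laplacian_hopfBarrier]
  refine mul_pos ?_ (Real.exp_pos _)
  nlinarith

end HopfBarrier

lemma IsMinimizer.mul_hopfBarrier_le {n : ℕ} {Ω : Set (EuclideanSpace ℝ (Fin n))}
    {u : EuclideanSpace ℝ (Fin n) → ℝ} (hu : IsMinimizer Ω u) {c : EuclideanSpace ℝ (Fin n)}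
    {R ρ a α : ℝ} (hb : ball c R ⊆ Ω) (hpos : ∀ x ∈ ball c R, 0 < u x) (hR : 0 ≤ R) (hρ : 0 ≤ ρ)
    (ha : 0 < a) (hua : ∀ x ∈ ball c ρ, a ≤ u x) (hα : 0 < α) (hαρ : n < 2 * α * ρ ^ 2)
    (x : EuclideanSpace ℝ (Fin n)) : a * hopfBarrier c α R x ≤ u x := by
  refine hu.le_of_laplacian_pos (φ := a • hopfBarrier c α R) hb
    (contDiff_hopfBarrier.const_smul a) (fun y hy ↦ ?_) x
  change u y < a * hopfBarrier c α R y at hy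
  have hyR : y ∈ ball c R := by
    by_contra hyR
    exact (hy.trans_le (mul_nonpos_of_nonneg_of_nonpos ha.le
      (hopfBarrier_nonpos hα.le hR hyR))).not_ge (hu.1 y)
  have hyρ : y ∉ ball c ρ := fun hyρ ↦
    (hua y hyρ).not_gt (hy.trans (mul_lt_of_lt_one_right ha (hopfBarrier_lt_one hα.le)))
  rw [InnerProductSpace.laplacian_smul a contDiff_hopfBarrier.contDiffAt]
  exact ⟨hyR, hpos y hyR, mul_pos ha (laplacian_hopfBarrier_pos hα hρ (by simpa using hαρ) hyρ)⟩

section Topology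

variable {ι X : Type*}

lemma eventually_forall_mem_of_forall_eventually_prod_nhds [TopologicalSpace X] {l : Filter ι}
    {K : Set X} (hK : IsCompact K) {P : ι → X → Prop}
    (hP : ∀ x ∈ K, ∀ᶠ p in l ×ˢ 𝓝 x, P p.1 p.2) : ∀ᶠ k in l, ∀ x ∈ K, P k x :=
  (Filter.Eventually.curry (hK.mem_prod_nhdsSet_of_forall hP)).mono fun _ h ↦ h.self_of_nhdsSet

lemma subset_of_isPreconnected_of_disjoint_frontier [TopologicalSpace X] {s A : Set X}
    (hs : IsPreconnected s) (hA : IsOpen A) (hsA : Disjoint s (frontier A))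
    (hne : (s ∩ A).Nonempty) : s ⊆ A := by
  refine hs.subset_left_of_subset_union hA isClosed_closure.isOpen_compl
    (disjoint_compl_right.mono_left subset_closure) (fun x hx ↦ ?_) hne
  by_contra! h
  rw [hA.frontier_eq] at hsA
  exact disjoint_left.1 hsA hx ⟨not_not.1 fun hc ↦ h (Or.inr hc), fun hxA ↦ h (Or.inl hxA)⟩

variable [PseudoMetricSpace X] {l : Filter ι}

lemma tendsto_prod_nhds_of_lipschitzOnWith {Y : Type*} [PseudoMetricSpace Y] {u : ι → X → Y}
    {L : ℝ≥0} {s : Set X} {x₀ : X} {a : Y} (hs : s ∈ 𝓝 x₀)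
    (hu : ∀ k, LipschitzOnWith L (u k) s) (ha : Tendsto (fun k ↦ u k x₀) l (𝓝 a)) :
    Tendsto (fun p : ι × X ↦ u p.1 p.2) (l ×ˢ 𝓝 x₀) (𝓝 a) := by
  have hbound : ∀ᶠ p : ι × X in l ×ˢ 𝓝 x₀,
      dist (u p.1 p.2) a ≤ L * dist p.2 x₀ + dist (u p.1 x₀) a := by
    filter_upwards [tendsto_snd.eventually hs] with p hp
    exact (dist_triangle _ (u p.1 x₀) _).trans
      (by gcongr; exact (hu p.1).dist_le_mul _ hp _ (mem_of_mem_nhds hs))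
  have hx : Tendsto (fun p : ι × X ↦ dist p.2 x₀) (l ×ˢ 𝓝 x₀) (𝓝 0) :=
    (tendsto_iff_dist_tendsto_zero.1 tendsto_id).comp tendsto_snd
  have hk : Tendsto (fun p : ι × X ↦ dist (u p.1 x₀) a) (l ×ˢ 𝓝 x₀) (𝓝 0) :=
    (tendsto_iff_dist_tendsto_zero.1 ha).comp tendsto_fst
  rw [tendsto_iff_dist_tendsto_zero]
  exact squeeze_zero' (.of_forall fun _ ↦ dist_nonneg) hbound
    (by simpa using (hx.const_mul (L : ℝ)).add hk)

lemma lipschitzOnWith_of_tendsto {Y : Type*} [PseudoMetricSpace Y] [l.NeBot] {u : ι → X → Y}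
    {v : X → Y} {L : ℝ≥0} {s : Set X} (hu : ∀ k, LipschitzOnWith L (u k) s)
    (huv : ∀ x ∈ s, Tendsto (fun k ↦ u k x) l (𝓝 (v x))) : LipschitzOnWith L v s :=
  .of_dist_le_mul fun x hx y hy ↦ le_of_tendsto ((huv x hx).dist (huv y hy))
    (.of_forall fun k ↦ (hu k).dist_le_mul x hx y hy)

/-- Local Hausdorff convergence in `Ω` of the sets `A k` to `B` along `l`: on each compact
`K ⊆ Ω`, points of `A k` are eventually close to `B`, and points of `B` are close to `A k`. The
nearby points are not required to lie in `K`, which avoids spurious failures at the boundary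
of `K`. -/
def TendstoLocallyHausdorffOn (A : ι → Set X) (B : Set X) (l : Filter ι) (Ω : Set X) : Prop :=
  ∀ K, IsCompact K → K ⊆ Ω → ∀ ε : ℝ, 0 < ε → ∀ᶠ k in l,
    (∀ x ∈ A k ∩ K, ∃ y ∈ B, dist x y ≤ ε) ∧ ∀ x ∈ B ∩ K, ∃ y ∈ A k, dist x y ≤ ε

lemma tendstoLocallyHausdorffOn_of_eventually {A : ι → Set X} {B Ω : Set X} (hΩ : IsOpen Ω)
    (hupper : ∀ x ∈ Ω, x ∉ closure B → ∀ᶠ p in l ×ˢ 𝓝 x, p.2 ∉ A p.1)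
    (hlower : ∀ x ∈ Ω ∩ B, ∀ U ∈ 𝓝 x, ∀ᶠ k in l, (A k ∩ U).Nonempty) :
    TendstoLocallyHausdorffOn A B l Ω := by
  intro K hK hKΩ ε hε
  have hAB : ∀ᶠ k in l, ∀ x ∈ K, x ∈ A k → ∃ y ∈ B, dist x y ≤ ε := by
    refine eventually_forall_mem_of_forall_eventually_prod_nhds hK fun x₀ hx₀ ↦ ?_
    by_cases hx₀B : x₀ ∈ closure B
    · obtain ⟨y, hy, hxy⟩ := Metric.mem_closure_iff.1 hx₀B ε hε
      filter_upwards [tendsto_snd.eventually (isOpen_ball.mem_nhds (mem_ball.2 hxy))] with p hp _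
      exact ⟨y, hy, (mem_ball.1 hp).le⟩
    · exact (hupper x₀ (hKΩ hx₀) hx₀B).mono fun _ hp hpA ↦ absurd hpA hp
  have hBA : ∀ᶠ k in l, ∀ x ∈ K, x ∈ B → ∃ y ∈ A k, dist x y ≤ ε := by
    refine eventually_forall_mem_of_forall_eventually_prod_nhds hK fun x₀ hx₀ ↦ ?_
    set U : Set X := Ω ∩ ball x₀ (ε / 2)
    have hU : IsOpen U := hΩ.inter isOpen_ball
    have hx₀U : ∀ᶠ p : ι × X in l ×ˢ 𝓝 x₀, p.2 ∈ U :=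
      tendsto_snd.eventually (hU.mem_nhds ⟨hKΩ hx₀, mem_ball_self (half_pos hε)⟩)
    by_cases hBU : ∃ z ∈ B, z ∈ U
    · obtain ⟨z, hzB, hzU⟩ := hBU
      filter_upwards [hx₀U, tendsto_fst.eventually (hlower z ⟨hzU.1, hzB⟩ U (hU.mem_nhds hzU))]
        with p hp ⟨y, hyA, hyU⟩ _
      refine ⟨y, hyA, (dist_triangle_right _ _ x₀).trans ?_⟩
      linarith [mem_ball.1 hp.2, mem_ball.1 hyU.2]
    · exact hx₀U.mono fun p hp hpB ↦ absurd ⟨p.2, hpB, hp⟩ hBU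
  filter_upwards [hAB, hBA] with k hk₁ hk₂
  exact ⟨fun x hx ↦ hk₁ x hx.2 hx.1, fun x hx ↦ hk₂ x hx.2 hx.1⟩

end Topology

section Compactness

variable {n : ℕ} {Ω : Set (EuclideanSpace ℝ (Fin n))} {ι : Type*} {l : Filter ι}
  {u : ι → EuclideanSpace ℝ (Fin n) → ℝ} {v : EuclideanSpace ℝ (Fin n) → ℝ}
  {x₀ : EuclideanSpace ℝ (Fin n)}

lemma eventually_notMem_closure_pos (hΩ : IsOpen Ω) (hmin : ∀ k, IsMinimizer Ω (u k))
    (hlip : ∀ K ⊆ Ω, IsCompact K → ∃ L : ℝ≥0, ∀ k, LipschitzOnWith L (u k) K)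
    (hconv : ∀ x ∈ Ω, Tendsto (fun p : ι × _ ↦ u p.1 p.2) (l ×ˢ 𝓝 x) (𝓝 (v x)))
    (hx₀ : x₀ ∈ Ω) (hv : x₀ ∉ closure {x | 0 < v x}) :
    ∀ᶠ p in l ×ˢ 𝓝 x₀, p.2 ∉ closure {x | 0 < u p.1 x} := by
  obtain ⟨R, hR, hball⟩ := nhds_basis_closedBall.mem_iff.1
    ((hΩ.inter isClosed_closure.isOpen_compl).mem_nhds ⟨hx₀, hv⟩)
  have hballΩ : closedBall x₀ R ⊆ Ω := hball.trans inter_subset_left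
  obtain ⟨L, hL⟩ := hlip _ hballΩ (isCompact_closedBall x₀ R)
  obtain ⟨η, hη, hzero⟩ := exists_forall_isMinimizer_eq_zero n L
  have hsmall : ∀ᶠ k in l, ∀ x ∈ closedBall x₀ R, u k x < η * (R / 2) := by
    refine eventually_forall_mem_of_forall_eventually_prod_nhds
      (isCompact_closedBall x₀ R) fun x hx ↦ ?_
    have hvx : v x ≤ 0 := not_lt.1 fun h ↦ (hball hx).2 (subset_closure h)
    exact (hconv x (hballΩ hx)).eventually_lt_const (hvx.trans_lt (by positivity))
  filter_upwards [tendsto_fst.eventually hsmall,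
    tendsto_snd.eventually (ball_mem_nhds x₀ (half_pos hR))] with p hp hpx
  suffices h : Disjoint (ball x₀ (R / 2)) {x | 0 < u p.1 x} from
    fun hcl ↦ disjoint_left.1 (h.closure_right isOpen_ball) hpx hcl
  refine disjoint_left.2 fun x hx hux ↦ ?_
  have hsub : ball x (R / 2) ⊆ closedBall x₀ R :=
    (ball_subset_ball' (by linarith [mem_ball.1 hx])).trans ball_subset_closedBall
  exact (ne_of_gt hux) (hzero Ω (u p.1) x (R / 2) (hmin p.1) (half_pos hR) (hsub.trans hballΩ)
    ((hL p.1).mono hsub) fun y hy ↦ (hp y (hsub hy)).le)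

lemma tendstoLocallyHausdorffOn_pos (hΩ : IsOpen Ω) (hmin : ∀ k, IsMinimizer Ω (u k))
    (hlip : ∀ K ⊆ Ω, IsCompact K → ∃ L : ℝ≥0, ∀ k, LipschitzOnWith L (u k) K)
    (hconv : ∀ x ∈ Ω, Tendsto (fun p : ι × _ ↦ u p.1 p.2) (l ×ˢ 𝓝 x) (𝓝 (v x))) :
    TendstoLocallyHausdorffOn (fun k ↦ {x | 0 < u k x}) {x | 0 < v x} l Ω := by
  refine tendstoLocallyHausdorffOn_of_eventually hΩ (fun x hx hxv ↦
    (eventually_notMem_closure_pos hΩ hmin hlip hconv hx hxv).mono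
      fun p hp hpu ↦ hp (subset_closure hpu)) fun x hx U hU ↦ ?_
  exact ((hconv x hx.1).eventually_const_lt hx.2).curry.mono
    fun k hk ↦ ⟨x, hk.self_of_nhds, mem_of_mem_nhds hU⟩

lemma IsMinimizer.mul_hopfBarrier_le_of_disjoint_frontier {w : EuclideanSpace ℝ (Fin n) → ℝ}
    (hw : IsMinimizer Ω w) {c : EuclideanSpace ℝ (Fin n)} {R ρ a α : ℝ} (hb : ball c R ⊆ Ω)
    (hdisj : Disjoint (ball c R) (frontier {x | 0 < w x})) (hR : 0 < R) (hρ : 0 < ρ) (ha : 0 < a)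
    (hwa : ∀ x ∈ ball c ρ, a ≤ w x) (hα : 0 < α) (hαρ : n < 2 * α * ρ ^ 2)
    (x : EuclideanSpace ℝ (Fin n)) : a * hopfBarrier c α R x ≤ w x := by
  have hpos : ball c R ⊆ {x | 0 < w x} :=
    subset_of_isPreconnected_of_disjoint_frontier (convex_ball c R).isPreconnected hw.isOpen_pos
      hdisj ⟨c, mem_ball_self hR, ha.trans_le (hwa c (mem_ball_self hρ))⟩
  exact hw.mul_hopfBarrier_le hb hpos hR.le hρ.le ha hwa hα hαρ x

lemma eventually_frontier_pos_inter_nonempty (hΩ : IsOpen Ω)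
    (hmin : ∀ k, IsMinimizer Ω (u k)) (hv : ContinuousOn v Ω)
    (hconv : ∀ x ∈ Ω, Tendsto (fun p : ι × _ ↦ u p.1 p.2) (l ×ˢ 𝓝 x) (𝓝 (v x)))
    (hx₀ : x₀ ∈ Ω ∩ frontier {x | 0 < v x}) {U : Set (EuclideanSpace ℝ (Fin n))}
    (hU : U ∈ 𝓝 x₀) : ∀ᶠ k in l, (Ω ∩ frontier {x | 0 < u k x} ∩ U).Nonempty := by
  have hvx₀ : v x₀ ≤ 0 := not_lt.1 fun h ↦ hx₀.2.2 <| mem_interior_iff_mem_nhds.2 <|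
    (hv.continuousAt (hΩ.mem_nhds hx₀.1)).eventually (lt_mem_nhds h)
  obtain ⟨R, hR, hball⟩ := Metric.mem_nhds_iff.1 (inter_mem (hΩ.mem_nhds hx₀.1) hU)
  obtain ⟨c, hc, hcx₀⟩ := Metric.mem_closure_iff.1 (frontier_subset_closure hx₀.2) (R / 2)
    (half_pos hR)
  have hsub : ball c (R / 2) ⊆ Ω ∩ U :=
    (ball_subset_ball' (by linarith [dist_comm x₀ c])).trans hball
  have hcΩ : c ∈ Ω := (hsub (mem_ball_self (half_pos hR))).1
  have hcpos : 0 < v c := hc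
  obtain ⟨ρ, hρ, hlarge⟩ : ∃ ρ > 0, ∀ᶠ k in l, ∀ x ∈ ball c ρ, v c / 2 ≤ u k x := by
    obtain ⟨p, hp, q, hq, hpq⟩ := eventually_prod_iff.1
      ((hconv c hcΩ).eventually_const_lt (half_lt_self hcpos))
    obtain ⟨ρ, hρ, hq⟩ := Metric.mem_nhds_iff.1 hq
    exact ⟨ρ, hρ, hp.mono fun k hk x hx ↦ (hpq hk (hq hx)).le⟩
  obtain ⟨α, hα, hαρ⟩ : ∃ α > 0, n < 2 * α * ρ ^ 2 :=
    ⟨(n + 1) / ρ ^ 2, by positivity, by field_simp; linarith [n.cast_nonneg (α := ℝ)]⟩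
  have hbarrier : 0 < v c / 2 * hopfBarrier c α (R / 2) x₀ :=
    mul_pos (half_pos hcpos) (hopfBarrier_pos hα (mem_ball.2 hcx₀))
  have hux₀ : ∀ᶠ k in l, u k x₀ < v c / 2 * hopfBarrier c α (R / 2) x₀ :=
    ((hconv x₀ hx₀.1).eventually_lt_const (hvx₀.trans_lt hbarrier)).curry.mono
      fun _ h ↦ h.self_of_nhds
  filter_upwards [hlarge, hux₀] with k hk hkx₀
  by_contra hempty
  have hdisj : Disjoint (ball c (R / 2)) (frontier {x | 0 < u k x}) :=
    disjoint_left.2 fun x hx hxF ↦ hempty ⟨x, ⟨(hsub hx).1, hxF⟩, (hsub hx).2⟩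
  exact hkx₀.not_ge ((hmin k).mul_hopfBarrier_le_of_disjoint_frontier
    (hsub.trans inter_subset_left) hdisj (half_pos hR) hρ (half_pos hcpos) hk hα hαρ x₀)

lemma tendstoLocallyHausdorffOn_frontier_pos (hΩ : IsOpen Ω)
    (hmin : ∀ k, IsMinimizer Ω (u k))
    (hlip : ∀ K ⊆ Ω, IsCompact K → ∃ L : ℝ≥0, ∀ k, LipschitzOnWith L (u k) K)
    (hv : ContinuousOn v Ω)
    (hconv : ∀ x ∈ Ω, Tendsto (fun p : ι × _ ↦ u p.1 p.2) (l ×ˢ 𝓝 x) (𝓝 (v x))) :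
    TendstoLocallyHausdorffOn (fun k ↦ Ω ∩ frontier {x | 0 < u k x})
      (Ω ∩ frontier {x | 0 < v x}) l Ω := by
  refine tendstoLocallyHausdorffOn_of_eventually hΩ (fun x hx hxF ↦ ?_) fun x hx U hU ↦
    eventually_frontier_pos_inter_nonempty hΩ hmin hv hconv hx.2 hU
  by_cases hxcl : x ∈ closure {x | 0 < v x}
  · have hvx : 0 < v x := by_contra fun hvx ↦
      hxF (subset_closure ⟨hx, hxcl, fun h ↦ hvx (interior_subset (s := {x | 0 < v x}) h)⟩)
    filter_upwards [(hconv x hx).eventually_const_lt hvx] with p hp hpF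
    exact (hmin p.1).isOpen_pos.inter_frontier_eq.subset ⟨hp, hpF.2⟩
  · exact (eventually_notMem_closure_pos hΩ hmin hlip hconv hx hxcl).mono
      fun p hp hpF ↦ hp (frontier_subset_closure hpF.2)

end Compactness

theorem stmt9_general {n : ℕ} {Ω : Set (EuclideanSpace ℝ (Fin n))} (hΩ : IsOpen Ω) {ι : Type*}
    {l : Filter ι} [l.NeBot] {u : ι → EuclideanSpace ℝ (Fin n) → ℝ}
    {v : EuclideanSpace ℝ (Fin n) → ℝ} (hmin : ∀ k, IsMinimizer Ω (u k))
    (hlip : ∀ K ⊆ Ω, IsCompact K → ∃ L : ℝ≥0, ∀ k, LipschitzOnWith L (u k) K)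
    (hconv : ∀ x ∈ Ω, Tendsto (fun k ↦ u k x) l (𝓝 (v x))) :
    TendstoLocallyHausdorffOn (fun k ↦ {x | 0 < u k x}) {x | 0 < v x} l Ω ∧
      TendstoLocallyHausdorffOn (fun k ↦ Ω ∩ frontier {x | 0 < u k x})
        (Ω ∩ frontier {x | 0 < v x}) l Ω := by
  have hnhds : ∀ x ∈ Ω, ∃ L : ℝ≥0, ∃ s ∈ 𝓝 x, s ⊆ Ω ∧ ∀ k, LipschitzOnWith L (u k) s := by
    intro x hx
    obtain ⟨r, hr, hs⟩ := nhds_basis_closedBall.mem_iff.1 (hΩ.mem_nhds hx)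
    obtain ⟨L, hL⟩ := hlip _ hs (isCompact_closedBall x r)
    exact ⟨L, _, closedBall_mem_nhds x hr, hs, hL⟩
  have hjoint : ∀ x ∈ Ω, Tendsto (fun p : ι × _ ↦ u p.1 p.2) (l ×ˢ 𝓝 x) (𝓝 (v x)) := by
    intro x hx
    obtain ⟨L, s, hs, -, hL⟩ := hnhds x hx
    exact tendsto_prod_nhds_of_lipschitzOnWith hs hL (hconv x hx)
  have hv : ContinuousOn v Ω := by
    refine continuousOn_of_forall_continuousAt fun x hx ↦ ?_
    obtain ⟨L, s, hs, hsΩ, hL⟩ := hnhds x hx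
    exact (lipschitzOnWith_of_tendsto hL fun y hy ↦ hconv y (hsΩ hy)).continuousOn.continuousAt hs
  exact ⟨tendstoLocallyHausdorffOn_pos hΩ hmin hlip hjoint,
    tendstoLocallyHausdorffOn_frontier_pos hΩ hmin hlip hv hjoint⟩

/-- compactness of minimizers — local Hausdorff convergence of the positivity
sets and of the free boundaries `F(w) = Ω ∩ ∂{w > 0}`. -/
theorem stmt9 {n : ℕ} (hn : 2 ≤ n) (Ω : Set (EuclideanSpace ℝ (Fin n))) (hΩ : IsOpen Ω)
    (u : ℕ → EuclideanSpace ℝ (Fin n) → ℝ)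
    (hmin : ∀ k, IsMinimizer Ω (u k))
    (hlip : ∀ K : Set (EuclideanSpace ℝ (Fin n)), IsCompact K →
      ∃ L : ℝ≥0, ∀ k, LipschitzOnWith L (u k) K)
    (v : EuclideanSpace ℝ (Fin n) → ℝ)
    (hconv : ∀ x, Tendsto (fun k => u k x) atTop (nhds (v x))) :
    ∀ K : Set (EuclideanSpace ℝ (Fin n)), IsCompact K → K ⊆ Ω → ∀ ε : ℝ, 0 < ε →
      ∃ N : ℕ, ∀ k ≥ N,
        (∀ x ∈ {x | 0 < u k x} ∩ K, ∃ y ∈ {x | 0 < v x}, dist x y ≤ ε) ∧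
        (∀ x ∈ {x | 0 < v x} ∩ K, ∃ y ∈ {x | 0 < u k x}, dist x y ≤ ε) ∧
        (∀ x ∈ (Ω ∩ frontier {x | 0 < u k x}) ∩ K,
          ∃ y ∈ Ω ∩ frontier {x | 0 < v x}, dist x y ≤ ε) ∧
        (∀ x ∈ (Ω ∩ frontier {x | 0 < v x}) ∩ K,
          ∃ y ∈ Ω ∩ frontier {x | 0 < u k x}, dist x y ≤ ε) := by
  intro K hK hKΩ ε hε
  obtain ⟨hpos, hfr⟩ := stmt9_general hΩ hmin (fun K _ ↦ hlip K) fun x _ ↦ hconv x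
  obtain ⟨N, hN⟩ := eventually_atTop.1 ((hpos K hK hKΩ ε hε).and (hfr K hK hKΩ ε hε))
  exact ⟨N, fun k hk ↦ and_assoc.1 (hN k hk)⟩
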